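/- arXiv:2508.17308 — 2 statements merged into one kernel-verified Lean document; each statement's English description precedes it below -/
import Mathlib

section
/- Let a be a repelling periodic point of g lying in the unbounded component Ω of ℂ \ P_g, and let z ∈ U ∩ Ω. Then for every simply connected domain W ⊂ Ω containing both a and z, there exists a sequence of well-defined inverse branches g^{-n_k} : W → ℂ (with n_k → ∞) such that g^{-n_k} converges to the constant a uniformly on compact subsets of W. -/
open Set Function Metric Topology Filter

noncomputable section

/-- A topological disk: a (nonempty, connected) simply connected planar domain. -/
def IsTopDisk (V : Set ℂ) : Prop :=
  IsOpen V ∧ IsConnected V ∧ SimplyConnectedSpace V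

/-- Critical points of `g` lying in `U'`. -/
def critPts (g : ℂ → ℂ) (U' : Set ℂ) : Set ℂ := {z | z ∈ U' ∧ deriv g z = 0}

/-- The postcritical set of `g : U' → U`. -/
def postCrit (g : ℂ → ℂ) (U' : Set ℂ) : Set ℂ :=
  closure (⋃ n : ℕ, g^[n] '' critPts g U')

/-- `g : U' → U` is a proper map: preimages of compact subsets of `U` are compact. -/
def ProperOn (g : ℂ → ℂ) (U' U : Set ℂ) : Prop :=
  ∀ K : Set ℂ, K ⊆ U → IsCompact K → IsCompact (U' ∩ g ⁻¹' K)

/-- `g : U' → U` has degree `d`: every point of `U` has a preimage, and every point of `U`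
which is not a critical value has exactly `d` preimages in `U'`. -/
def HasDeg (g : ℂ → ℂ) (U' U : Set ℂ) (d : ℕ) : Prop :=
  (∀ w ∈ U, (U' ∩ g ⁻¹' {w}).Nonempty) ∧
  ∀ w ∈ U, w ∉ g '' critPts g U' → (U' ∩ g ⁻¹' {w}).ncard = d

/-- Standing assumptions: `U' ⊆ U` are simply connected domains in `ℂ` with `U' ≠ U`,
`g : U' → U` is a proper holomorphic map of degree `d ≥ 2`, all forward iterates of the
critical points are defined, the postcritical set is a compact subset of `U'`, and if the
postcritical set is a singleton `{c}` then `g⁻¹(c) ≠ {c}`. -/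
structure PLSetting (g : ℂ → ℂ) (U' U : Set ℂ) (d : ℕ) : Prop where
  disk' : IsTopDisk U'
  disk : IsTopDisk U
  subset : U' ⊆ U
  ne : U' ≠ U
  two_le_d : 2 ≤ d
  holo : DifferentiableOn ℂ g U'
  mapsTo : MapsTo g U' U
  proper : ProperOn g U' U
  deg : HasDeg g U' U d
  crit_orbit : ∀ c ∈ critPts g U', ∀ n : ℕ, g^[n] c ∈ U'
  postCrit_compact : IsCompact (postCrit g U')
  postCrit_subset : postCrit g U' ⊆ U'
  postCrit_singleton : ∀ c : ℂ, postCrit g U' = {c} → U' ∩ g ⁻¹' {c} ≠ {c}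

/-! Since `g` is a covering over the complement of its critical values, and `W` is simply connected
and avoids the postcritical set, every backward orbit of `a` along its cycle extends to holomorphic
inverse branches on `W`. These take values in the simply connected domain `U' ≠ ℂ`, which admits an
injective bounded holomorphic map, so by the Schwarz lemma they are equicontinuous at `a`. Near `a`
the iterate `g^p` is expanding, hence its inverse branches contract to `a` at a geometric rate on a
neighbourhood of `a`, and Vitali's theorem propagates the convergence to all of `W`. -/

theorem eventually_mul_norm_sub_le_of_hasDerivAt {𝕜 F : Type*} [NontriviallyNormedField 𝕜]
    [NormedAddCommGroup F] [NormedSpace 𝕜 F] {f : 𝕜 → F} {f' : F} {a : 𝕜} {c : ℝ}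
    (hf : HasDerivAt f f' a) (hc : c < ‖f'‖) :
    ∀ᶠ x in 𝓝 a, c * ‖x - a‖ ≤ ‖f x - f a‖ := by
  have hslope : ∀ᶠ x in 𝓝[≠] a, c < ‖slope f a x‖ := hf.tendsto_slope.norm.eventually_const_lt hc
  filter_upwards [eventually_nhdsWithin_iff.1 hslope] with x hx
  rcases eq_or_ne x a with rfl | hxa
  · simp
  · calc c * ‖x - a‖ ≤ ‖slope f a x‖ * ‖x - a‖ := by gcongr; exact (hx hxa).le
      _ = ‖f x - f a‖ := by
        rw [mul_comm, ← norm_smul, sub_smul_slope, vsub_eq_sub]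

theorem tendstoUniformlyOn_const_of_expanding {α X : Type*} [PseudoMetricSpace X] {G : X → X}
    {a : X} {r μ : ℝ} (hμ : 1 < μ) (hG : ∀ x ∈ ball a r, μ * dist x a ≤ dist (G x) a)
    {s : Set α} {h : ℕ → α → X} (hmaps : ∀ k, MapsTo (h k) s (ball a r))
    (hGh : ∀ k, EqOn (G ∘ h (k + 1)) (h k) s) :
    TendstoUniformlyOn h (fun _ => a) atTop s := by
  have hμ₀ : 0 < μ := one_pos.trans hμ
  have hdist : ∀ k, ∀ w ∈ s, dist (h k w) a ≤ r / μ ^ k := by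
    intro k w hw
    induction k with
    | zero => simpa using (hmaps 0 hw).le
    | succ k ih =>
      have hstep : μ * dist (h (k + 1) w) a ≤ r / μ ^ k := calc
        μ * dist (h (k + 1) w) a ≤ dist (G (h (k + 1) w)) a := hG _ (hmaps (k + 1) hw)
        _ = dist (h k w) a := by rw [← hGh k hw, comp_apply]
        _ ≤ r / μ ^ k := ih
      rwa [pow_succ, ← div_div, le_div_iff₀' hμ₀]
  have hlim : Tendsto (fun k : ℕ => r / μ ^ k) atTop (𝓝 0) :=
    tendsto_const_nhds.div_atTop (tendsto_pow_atTop_atTop_of_one_lt hμ)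
  refine Metric.tendstoUniformlyOn_iff.2 fun ε hε => ?_
  filter_upwards [hlim.eventually_lt_const hε] with k hk w hw
  rw [dist_comm]
  exact (hdist k w hw).trans_lt hk

theorem differentiableAt_of_comp_eventuallyEq {𝕜 E : Type*} [NontriviallyNormedField 𝕜]
    [CompleteSpace 𝕜] [NormedAddCommGroup E] [NormedSpace 𝕜 E]
    {g : 𝕜 → 𝕜} {g' : 𝕜} {f F : E → 𝕜} {w : E}
    (hg : HasStrictDerivAt g g' (F w)) (hg' : g' ≠ 0) (hf : DifferentiableAt 𝕜 f w)
    (hF : ContinuousAt F w) (hgF : g ∘ F =ᶠ[𝓝 w] f) : DifferentiableAt 𝕜 F w := by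
  have hinv : DifferentiableAt 𝕜 (hg.localInverse g g' (F w) hg') (f w) := by
    rw [← hgF.eq_of_nhds]
    exact (hg.to_localInverse hg').hasDerivAt.differentiableAt
  refine (hinv.comp w hf).congr_of_eventuallyEq ?_
  filter_upwards [hF.eventually (hg.hasStrictFDerivAt_equiv hg').eventually_left_inverse, hgF]
    with v hv hgv
  rw [comp_apply, ← hgv]
  exact hv.symm

theorem ne_zero_of_sq_eq_sub {R : Type*} [Ring R] {s x b : R} (hs : s ^ 2 = x - b)
    (hx : x ≠ b) : s ≠ 0 := by
  rintro rfl
  exact hx (sub_eq_zero.1 (by simpa using hs.symm))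

theorem exists_differentiableOn_sq_eq_sub {V : Set ℂ} (hVo : IsOpen V) (hVc : IsSimplyConnected V)
    {b : ℂ} (hb : b ∉ V) :
    ∃ s : ℂ → ℂ, DifferentiableOn ℂ s V ∧ ∀ x, s x ^ 2 = x - b := by
  obtain ⟨s, hsc, hs⟩ := Complex.exists_continuousOn_pow_eq hVc hVo (g := fun x : ℂ => x - b)
    (by fun_prop) (by rintro ⟨x, hx, hxb⟩; exact hb (sub_eq_zero.1 hxb ▸ hx)) two_ne_zero
  refine ⟨s, fun w hw => DifferentiableAt.differentiableWithinAt ?_, hs⟩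
  have hsw : s w ≠ 0 := ne_zero_of_sq_eq_sub (hs w) (ne_of_mem_of_not_mem hw hb)
  exact differentiableAt_of_comp_eventuallyEq (hasStrictDerivAt_pow 2 (s w)) (by simpa using hsw)
    (by fun_prop) (hsc.continuousAt (hVo.mem_nhds hw)) (.of_forall hs)

theorem neg_notMem_closure_image_of_sq_eq_sub {V : Set ℂ} {s : ℂ → ℂ} {a b : ℂ} (ha : a ∈ V)
    (hsc : ContinuousWithinAt s V a) (hs : ∀ x ∈ V, s x ^ 2 = x - b) (hab : a ≠ b) :
    -s a ∉ closure (s '' V) := by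
  intro hmem
  obtain ⟨u, huV, hu⟩ := mem_closure_iff_seq_limit.1 hmem
  choose x hxV hxu using huV
  obtain rfl : s ∘ x = u := funext hxu
  have hx : Tendsto x atTop (𝓝[V] a) := by
    refine tendsto_nhdsWithin_iff.2 ⟨?_, .of_forall hxV⟩
    simpa [hs _ (hxV _), hs a ha] using (hu.pow 2).add_const b
  have hneg : s a = -s a := tendsto_nhds_unique (hsc.tendsto.comp hx) hu
  exact ne_zero_of_sq_eq_sub (hs a ha) hab (self_eq_neg.1 hneg)

-- Koebe's square root trick: `s '' V` stays away from `-s a`, so it is bounded after the Möbius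
-- map sending `s a` to `0` and `-s a` to `∞`; `ψ` undoes the Möbius map and the square root.
theorem exists_bounded_differentiableOn_leftInvOn {V : Set ℂ} (hVo : IsOpen V)
    (hVc : IsSimplyConnected V) (hV : V ≠ univ) {a : ℂ} (ha : a ∈ V) :
    ∃ (φ ψ : ℂ → ℂ) (M : ℝ), DifferentiableOn ℂ φ V ∧ MapsTo φ V (closedBall 0 M) ∧ φ a = 0 ∧
      ContinuousAt ψ 0 ∧ LeftInvOn ψ φ V := by
  obtain ⟨b, hb⟩ := (ne_univ_iff_exists_notMem V).1 hV
  obtain ⟨s, hsd, hs⟩ := exists_differentiableOn_sq_eq_sub hVo hVc hb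
  have hab : a ≠ b := ne_of_mem_of_not_mem ha hb
  have hsa : s a ≠ 0 := ne_zero_of_sq_eq_sub (hs a) hab
  obtain ⟨ε, hε, hsep⟩ : ∃ ε > 0, ∀ x ∈ V, ε ≤ ‖s x + s a‖ := by
    have hnot := neg_notMem_closure_image_of_sq_eq_sub ha (hsd.continuousOn a ha)
      (fun x _ => hs x) hab
    simpa [Metric.mem_closure_iff, dist_eq_norm', sub_neg_eq_add] using hnot
  have hne : ∀ x ∈ V, s x + s a ≠ 0 := fun x hx => norm_pos_iff.1 (hε.trans_le (hsep x hx))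
  refine ⟨fun x => (s x - s a) / (s x + s a), fun ζ => (s a * ((1 + ζ) / (1 - ζ))) ^ 2 + b,
    1 + 2 * ‖s a‖ / ε, (hsd.sub_const _).div (hsd.add_const _) hne, fun x hx => ?_, by simp, ?_,
    fun x hx => ?_⟩
  · have hφ : (s x - s a) / (s x + s a) = 1 - 2 * s a / (s x + s a) := by
      field [hne x hx]
    simp only [mem_closedBall_zero_iff, hφ]
    calc ‖1 - 2 * s a / (s x + s a)‖ ≤ ‖(1 : ℂ)‖ + ‖2 * s a / (s x + s a)‖ := norm_sub_le _ _
      _ = 1 + 2 * ‖s a‖ / ‖s x + s a‖ := by simp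
      _ ≤ 1 + 2 * ‖s a‖ / ε := by gcongr; exact hsep x hx
  · have h1 : (1 : ℂ) - 0 ≠ 0 := by simp
    fun_prop (disch := assumption)
  · have hratio :
        (1 + (s x - s a) / (s x + s a)) / (1 - (s x - s a) / (s x + s a)) = s x / s a := by
      have h1 : 1 + (s x - s a) / (s x + s a) = 2 * s x / (s x + s a) := by field [hne x hx]
      have h2 : 1 - (s x - s a) / (s x + s a) = 2 * s a / (s x + s a) := by field [hne x hx]
      rw [h1, h2, div_div_div_cancel_right₀ (hne x hx), mul_div_mul_left _ _ two_ne_zero]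
    simp only [hratio, mul_div_cancel₀ _ hsa, hs, sub_add_cancel]

section Vitali

variable {ι E : Type*} [NormedAddCommGroup E] [NormedSpace ℂ E] [CompleteSpace E]

theorem norm_inv_factorial_smul_iteratedDeriv_le {f : ℂ → E} {c : ℂ} {R C : ℝ} (k : ℕ)
    (hR : 0 < R) (hf : DiffContOnCl ℂ f (ball c R)) (hC : ∀ z ∈ sphere c R, ‖f z‖ ≤ C) :
    ‖(k.factorial : ℂ)⁻¹ • iteratedDeriv k f c‖ ≤ C / R ^ k := by
  have hk : (0 : ℝ) < k.factorial := mod_cast k.factorial_pos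
  rw [norm_smul, norm_inv, Complex.norm_natCast, inv_mul_le_iff₀ hk, ← mul_div_assoc]
  exact Complex.norm_iteratedDeriv_le_of_forall_mem_sphere_norm_le k hR hf hC

variable {F : ι → ℂ → E} {l : Filter ι}

theorem tendsto_inv_factorial_smul_iteratedDeriv_zero {c : ℂ} {R : ℝ} (hR : 0 < R)
    (hF : ∀ i, DiffContOnCl ℂ (F i) (ball c R))
    (hlim : TendstoUniformlyOn F 0 l (closedBall c R)) (k : ℕ) :
    Tendsto (fun i => (k.factorial : ℂ)⁻¹ • iteratedDeriv k (F i) c) l (𝓝 0) := by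
  refine Metric.tendsto_nhds.2 fun ε hε => ?_
  filter_upwards [Metric.tendstoUniformlyOn_iff.1 hlim (ε / 2 * R ^ k) (by positivity)] with i hi
  rw [dist_zero_right]
  calc ‖(k.factorial : ℂ)⁻¹ • iteratedDeriv k (F i) c‖
      ≤ ε / 2 * R ^ k / R ^ k := norm_inv_factorial_smul_iteratedDeriv_le k hR (hF i)
        fun z hz => by simpa using (hi z (sphere_subset_closedBall hz)).le
    _ = ε / 2 := mul_div_cancel_right₀ _ (by positivity)
    _ < ε := half_lt_self hε

theorem tendstoUniformlyOn_zero_of_tendsto_taylorCoeff {c : ℂ} {r R M : ℝ} (hr : 0 ≤ r)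
    (hrR : r < R) (hF : ∀ i, DiffContOnCl ℂ (F i) (ball c R))
    (hM : ∀ i, ∀ z ∈ sphere c R, ‖F i z‖ ≤ M)
    (hcoeff : ∀ k : ℕ,
      Tendsto (fun i => (k.factorial : ℂ)⁻¹ • iteratedDeriv k (F i) c) l (𝓝 0)) :
    TendstoUniformlyOn F 0 l (closedBall c r) := by
  have hR : 0 < R := hr.trans_lt hrR
  have hterm : ∀ i k, ‖(k.factorial : ℂ)⁻¹ • iteratedDeriv k (F i) c‖ * r ^ k ≤ M * (r / R) ^ k :=
    fun i k => calc
      _ ≤ M / R ^ k * r ^ k := by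
        gcongr; exact norm_inv_factorial_smul_iteratedDeriv_le k hR (hF i) (hM i)
      _ = M * (r / R) ^ k := by rw [div_pow]; ring
  have hgeom : Summable fun k : ℕ => M * (r / R) ^ k :=
    (summable_geometric_of_lt_one (by positivity) ((div_lt_one hR).2 hrR)).mul_left M
  have hsum : Tendsto (fun i => ∑' k : ℕ, ‖(k.factorial : ℂ)⁻¹ • iteratedDeriv k (F i) c‖ * r ^ k)
      l (𝓝 0) := by
    simpa using tendsto_tsum_of_dominated_convergence hgeom
      (fun k => (hcoeff k).norm.mul_const (r ^ k))
      (.of_forall fun i k => by simpa [abs_of_nonneg hr] using hterm i k)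
  refine Metric.tendstoUniformlyOn_iff.2 fun ε hε => ?_
  filter_upwards [hsum.eventually_lt_const hε] with i hi z hz
  rw [Pi.zero_apply, dist_zero_left]
  have htaylor := Complex.hasSum_taylorSeries_on_ball (hF i).differentiableOn
    (closedBall_subset_ball hrR hz)
  refine (htaylor.norm_le_of_bounded
    (hgeom.of_nonneg_of_le (fun k => by positivity) (hterm i)).hasSum fun k => ?_).trans_lt hi
  rw [smul_comm, norm_smul, norm_pow, mul_comm]
  gcongr
  exact mem_closedBall_iff_norm.1 hz

theorem exists_mem_nhds_tendstoUniformlyOn_zero_of_mem_ball {c w : ℂ} {R M : ℝ} {t : Set ℂ}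
    (hF : ∀ i, DifferentiableOn ℂ (F i) (ball c R)) (hM : ∀ i, ∀ z ∈ ball c R, ‖F i z‖ ≤ M)
    (hw : w ∈ ball c R) (ht : t ∈ 𝓝 c) (hlim : TendstoUniformlyOn F 0 l t) :
    ∃ s ∈ 𝓝 w, TendstoUniformlyOn F 0 l s := by
  obtain ⟨r, hwr, hrR⟩ := exists_between (mem_ball.1 hw)
  obtain ⟨R', hrR', hR'R⟩ := exists_between hrR
  have hdiff : ∀ ρ < R, ∀ i, DiffContOnCl ℂ (F i) (ball c ρ) := fun ρ hρ i =>
    ((hF i).mono (closedBall_subset_ball hρ)).diffContOnCl_ball subset_rfl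
  obtain ⟨ρ, hρ, hρt⟩ := nhds_basis_closedBall.mem_iff.1 ht
  have hρ' : 0 < min ρ R' := lt_min hρ ((dist_nonneg.trans_lt hwr).trans hrR')
  refine ⟨closedBall c r, closedBall_mem_nhds_of_mem hwr,
    tendstoUniformlyOn_zero_of_tendsto_taylorCoeff (dist_nonneg.trans hwr.le) hrR' (hdiff R' hR'R)
      (fun i z hz => hM i z (sphere_subset_closedBall.trans (closedBall_subset_ball hR'R) hz))
      (tendsto_inv_factorial_smul_iteratedDeriv_zero hρ'
        (hdiff _ ((min_le_right _ _).trans_lt hR'R))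
        (hlim.mono ((closedBall_subset_closedBall (min_le_left _ _)).trans hρt)))⟩

theorem tendstoLocallyUniformlyOn_zero_of_locallyBounded {W : Set ℂ} {a : ℂ} {t : Set ℂ}
    (hWo : IsOpen W) (hWc : IsPreconnected W) (hF : ∀ i, DifferentiableOn ℂ (F i) W)
    (hbdd : ∀ w ∈ W, ∃ s ∈ 𝓝 w, ∃ M, ∀ i, ∀ x ∈ s, ‖F i x‖ ≤ M) (ha : a ∈ W) (ht : t ∈ 𝓝 a)
    (hlim : TendstoUniformlyOn F 0 l t) : TendstoLocallyUniformlyOn F 0 l W := by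
  let S : Set ℂ := {w | ∃ s ∈ 𝓝 w, TendstoUniformlyOn F 0 l s}
  suffices hWS : W ⊆ S from fun u hu w hw =>
    let ⟨s, hs, hsF⟩ := hWS hw
    ⟨s, mem_nhdsWithin_of_mem_nhds hs, hsF u hu⟩
  have hSo : IsOpen S := isOpen_iff_mem_nhds.2 fun w ⟨s, hs, hsF⟩ =>
    (eventually_mem_nhds_iff.2 hs).mono fun x hx => ⟨s, hx, hsF⟩
  refine hWc.subset_of_closure_inter_subset hSo ⟨a, ha, t, ht, hlim⟩ ?_
  rintro w ⟨hwS, hwW⟩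
  obtain ⟨s, hs, M, hM⟩ := hbdd w hwW
  obtain ⟨R, hR, hball⟩ := Metric.mem_nhds_iff.1 (inter_mem hs (hWo.mem_nhds hwW))
  obtain ⟨c, ⟨t', ht', hlim'⟩, hcw⟩ := Metric.mem_closure_iff.1 hwS (R / 2) (half_pos hR)
  have hsub : ball c (R / 2) ⊆ s ∩ W :=
    (ball_subset_ball' (by rw [dist_comm]; linarith)).trans hball
  exact exists_mem_nhds_tendstoUniformlyOn_zero_of_mem_ball
    (fun i => (hF i).mono (hsub.trans inter_subset_right))
    (fun i z hz => hM i z (hsub hz).1) hcw ht' hlim'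

end Vitali

theorem exists_mem_nhds_forall_mapsTo {V W N : Set ℂ} (hVo : IsOpen V) (hVc : IsSimplyConnected V)
    (hV : V ≠ univ) (hWo : IsOpen W) {a b : ℂ} (ha : a ∈ W) (hb : b ∈ V) (hN : N ∈ 𝓝 b) :
    ∃ t ∈ 𝓝 a, ∀ f : ℂ → ℂ, DifferentiableOn ℂ f W → MapsTo f W V → f a = b → MapsTo f t N := by
  obtain ⟨φ, ψ, M, hφd, hφM, hφb, hψ, hψφ⟩ :=
    exists_bounded_differentiableOn_leftInvOn hVo hVc hV hb
  have hψ0 : ψ 0 = b := hφb ▸ hψφ hb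
  obtain ⟨ε, hε, hεN⟩ := Metric.mem_nhds_iff.1 (hψ.preimage_mem_nhds (hψ0.symm ▸ hN))
  obtain ⟨R, hR, hRW⟩ := Metric.isOpen_iff.1 hWo a ha
  have hsmall : ∀ᶠ w in 𝓝 a, M / R * dist w a < ε := by
    refine ContinuousAt.eventually_lt (by fun_prop) continuousAt_const ?_
    simpa using hε
  refine ⟨_, inter_mem hsmall (ball_mem_nhds a hR), fun f hfd hfV hfa w ⟨hwε, hwR⟩ => ?_⟩
  have hschwarz : dist (φ (f w)) (φ (f a)) ≤ M / R * dist w a :=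
    Complex.dist_le_div_mul_dist_of_mapsTo_ball ((hφd.comp hfd hfV).mono hRW)
      (fun x hx => by simpa [hfa, hφb] using hφM (hfV (hRW hx))) hwR
  rw [hfa, hφb] at hschwarz
  have hmem : ψ (φ (f w)) ∈ N := hεN (hschwarz.trans_lt hwε)
  rwa [hψφ (hfV (hRW hwR))] at hmem

theorem tendstoLocallyUniformlyOn_const_of_mapsTo {ι : Type*} {F : ι → ℂ → ℂ} {l : Filter ι}
    {V W t : Set ℂ} {a b : ℂ} (hVo : IsOpen V) (hVc : IsSimplyConnected V) (hV : V ≠ univ)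
    (hWo : IsOpen W) (hWc : IsPreconnected W) (hF : ∀ i, DifferentiableOn ℂ (F i) W)
    (hFV : ∀ i, MapsTo (F i) W V) (ha : a ∈ W) (hb : b ∈ V) (ht : t ∈ 𝓝 a)
    (hlim : TendstoUniformlyOn F (fun _ => b) l t) :
    TendstoLocallyUniformlyOn F (fun _ => b) l W := by
  obtain ⟨φ, ψ, M, hφd, hφM, hφb, hψ, hψφ⟩ :=
    exists_bounded_differentiableOn_leftInvOn hVo hVc hV hb
  have hψ0 : ψ 0 = b := hφb ▸ hψφ hb
  have hφ : Tendsto φ (𝓝 b) (𝓝 0) :=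
    hφb ▸ (hφd.continuousOn.continuousAt (hVo.mem_nhds hb)).tendsto
  have hlim' : TendstoUniformlyOn (fun i => φ ∘ F i) 0 l t :=
    tendsto_prod_principal_iff.1 (hφ.comp (tendsto_prod_principal_iff.2 hlim))
  have hφF : TendstoLocallyUniformlyOn (fun i => φ ∘ F i) 0 l W :=
    tendstoLocallyUniformlyOn_zero_of_locallyBounded hWo hWc (fun i => hφd.comp (hF i) (hFV i))
      (fun w hw => ⟨W, hWo.mem_nhds hw, M, fun i x hx =>
        mem_closedBall_zero_iff.1 (hφM (hFV i hx))⟩) ha ht hlim'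
  have hψφF : TendstoLocallyUniformlyOn (fun i => ψ ∘ φ ∘ F i) (fun _ => b) l W := by
    rw [tendstoLocallyUniformlyOn_iff_filter] at hφF ⊢
    exact fun w hw => tendsto_prod_filter_iff.1
      ((hψ0 ▸ hψ.tendsto).comp (tendsto_prod_filter_iff.2 (hφF w hw)))
  exact hψφF.congr fun i w hw => hψφ (hFV i hw)

theorem tendstoLocallyUniformlyOn_inverse_iterates {V W : Set ℂ} {G : ℂ → ℂ} {h : ℕ → ℂ → ℂ}
    {a : ℂ} (hVo : IsOpen V) (hVc : IsSimplyConnected V) (hV : V ≠ univ) (hWo : IsOpen W)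
    (hWc : IsPreconnected W) (haV : a ∈ V) (haW : a ∈ W) (hG : 1 < ‖deriv G a‖)
    (hd : ∀ k, DifferentiableOn ℂ (h k) W) (hhV : ∀ k, MapsTo (h k) W V) (hha : ∀ k, h k a = a)
    (hGh : ∀ k, EqOn (G ∘ h (k + 1)) (h k) W) :
    TendstoLocallyUniformlyOn h (fun _ => a) atTop W := by
  have hGa : G a = a := by simpa [hha] using hGh 0 haW
  have hderiv : HasDerivAt G (deriv G a) a :=
    (differentiableAt_of_deriv_ne_zero (norm_pos_iff.1 (one_pos.trans hG))).hasDerivAt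
  obtain ⟨μ, hμ, hμG⟩ := exists_between hG
  obtain ⟨r, hr, hexp⟩ := Metric.eventually_nhds_iff_ball.1
    (eventually_mul_norm_sub_le_of_hasDerivAt hderiv hμG)
  obtain ⟨t, ht, hmaps⟩ :=
    exists_mem_nhds_forall_mapsTo hVo hVc hV hWo haW haV (ball_mem_nhds a hr)
  have hlim : TendstoUniformlyOn h (fun _ => a) atTop (t ∩ W) :=
    tendstoUniformlyOn_const_of_expanding hμ
      (fun x hx => by simpa only [dist_eq_norm, hGa] using hexp x hx)
      (fun k => (hmaps (h k) (hd k) (hhV k) (hha k)).mono_left inter_subset_left)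
      (fun k => (hGh k).mono inter_subset_right)
  exact tendstoLocallyUniformlyOn_const_of_mapsTo hVo hVc hV hWo hWc hd hhV haW haV
    (inter_mem ht (hWo.mem_nhds haW)) hlim

theorem isCoveringMapOn_of_isProperMap_of_isLocalHomeomorphOn {E X : Type*} [TopologicalSpace E]
    [TopologicalSpace X] [T2Space E] [T1Space X] {f : E → X} {s : Set X} (hf : IsProperMap f)
    (hs : IsLocalHomeomorphOn f (f ⁻¹' s)) : IsCoveringMapOn f s := by
  refine hf.isClosedMap.isCoveringMapOn_of_isLocalHomeomorphOn (fun x hx => ?_) hs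
  have hfibre : f ⁻¹' {x} ⊆ f ⁻¹' s := preimage_mono (singleton_subset_iff.2 hx)
  refine (hf.isCompact_preimage isCompact_singleton).finite
    (IsDiscrete.of_openPartialHomeomorph f subset_rfl fun e he => ?_)
  obtain ⟨φ, hφ, rfl⟩ := hs e (hfibre he)
  exact ⟨φ, hφ, rfl⟩

theorem image_critPts_subset_postCrit (g : ℂ → ℂ) (U' : Set ℂ) :
    g '' critPts g U' ⊆ postCrit g U' :=
  (subset_iUnion (fun n : ℕ => g^[n] '' critPts g U') 1).trans subset_closure

theorem apply_mem_postCrit {g : ℂ → ℂ} {U' : Set ℂ} {x : ℂ} (hg : ContinuousAt g x)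
    (hx : x ∈ postCrit g U') :
    g x ∈ postCrit g U' := by
  refine closure_mono ?_ (hg.continuousWithinAt.mem_closure_image hx)
  rw [image_iUnion]
  exact iUnion_subset fun n => by
    rw [← image_comp, ← iterate_succ']
    exact subset_iUnion (fun n : ℕ => g^[n] '' critPts g U') (n + 1)

/-- A proper holomorphic map `g : U' → U` between open subsets of the plane, encoded like
`PLSetting` as a function on `ℂ` of which only the values on `U'` matter. -/
structure IsProperHolomorphic (g : ℂ → ℂ) (U' U : Set ℂ) : Prop where
  isOpen_source : IsOpen U'
  isOpen_target : IsOpen U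
  differentiableOn : DifferentiableOn ℂ g U'
  mapsTo : MapsTo g U' U
  properOn : ProperOn g U' U

theorem PLSetting.isProperHolomorphic {g : ℂ → ℂ} {U' U : Set ℂ} {d : ℕ}
    (H : PLSetting g U' U d) : IsProperHolomorphic g U' U :=
  ⟨H.disk'.1, H.disk.1, H.holo, H.mapsTo, H.proper⟩

namespace IsProperHolomorphic

variable {g : ℂ → ℂ} {U' U : Set ℂ}

theorem hasStrictDerivAt (H : IsProperHolomorphic g U' U) {x : ℂ} (hx : x ∈ U') :
    HasStrictDerivAt g (deriv g x) x :=
  (H.differentiableOn.analyticAt (H.isOpen_source.mem_nhds hx)).hasStrictDerivAt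

theorem continuous_restrict (H : IsProperHolomorphic g U' U) :
    Continuous (H.mapsTo.restrict g U' U) :=
  H.differentiableOn.continuousOn.mapsToRestrict H.mapsTo

theorem isProperMap_restrict (H : IsProperHolomorphic g U' U) :
    IsProperMap (H.mapsTo.restrict g U' U) := by
  have : LocallyCompactSpace U := H.isOpen_target.locallyCompactSpace
  refine isProperMap_iff_isCompact_preimage.2 ⟨H.continuous_restrict, fun K hK => ?_⟩
  have himage : Subtype.val '' (H.mapsTo.restrict g U' U ⁻¹' K) =
      U' ∩ g ⁻¹' (Subtype.val '' K) := by
    refine Subset.antisymm (image_subset_iff.2 fun y hy => ⟨y.2, _, hy, rfl⟩) ?_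
    rintro x ⟨hx, y, hy, hyx⟩
    obtain rfl : y = H.mapsTo.restrict g U' U ⟨x, hx⟩ := Subtype.ext hyx
    exact ⟨⟨x, hx⟩, hy, rfl⟩
  rw [Subtype.isCompact_iff, himage]
  exact H.properOn _ (Subtype.coe_image_subset U K) (hK.image continuous_subtype_val)

theorem isLocalHomeomorphOn_restrict (H : IsProperHolomorphic g U' U) :
    IsLocalHomeomorphOn (H.mapsTo.restrict g U' U) {x | deriv g x ≠ 0} := by
  refine IsLocalHomeomorphOn.of_comp_left (g := Subtype.val) ?_
    H.isOpen_target.isOpenEmbedding_subtypeVal.isLocalHomeomorph.isLocalHomeomorphOn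
    fun x _ => H.continuous_restrict.continuousAt
  have hg : IsLocalHomeomorphOn g {x | x ∈ U' ∧ deriv g x ≠ 0} := fun x hx =>
    have hx' := (H.hasStrictDerivAt hx.1).hasStrictFDerivAt_equiv hx.2
    ⟨hx'.toOpenPartialHomeomorph g, hx'.mem_toOpenPartialHomeomorph_source, rfl⟩
  exact hg.comp H.isOpen_source.isOpenEmbedding_subtypeVal.isLocalHomeomorph.isLocalHomeomorphOn
    fun x hx => ⟨x.2, hx⟩

theorem isCoveringMapOn_restrict (H : IsProperHolomorphic g U' U) :
    IsCoveringMapOn (H.mapsTo.restrict g U' U) {y | (y : ℂ) ∉ g '' critPts g U'} :=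
  isCoveringMapOn_of_isProperMap_of_isLocalHomeomorphOn H.isProperMap_restrict <|
    H.isLocalHomeomorphOn_restrict.mono fun x hx h0 => hx ⟨x, ⟨x.2, h0⟩, rfl⟩

theorem exists_continuousOn_lift (H : IsProperHolomorphic g U' U) {E : Type*} [TopologicalSpace E]
    [LocallyPathConnectedSpace E] {W : Set E} (hWo : IsOpen W)
    (hWc : IsSimplyConnected W) {f : E → ℂ} (hf : ContinuousOn f W)
    (hfU : MapsTo f W (U \ g '' critPts g U')) {a : E} {b : ℂ} (ha : a ∈ W) (hb : b ∈ U')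
    (hgb : g b = f a) :
    ∃ F : E → ℂ, ContinuousOn F W ∧ MapsTo F W U' ∧ F a = b ∧ EqOn (g ∘ F) f W := by
  have : LocallyPathConnectedSpace W := hWo.locallyPathConnectedSpace
  have : SimplyConnectedSpace W := hWc
  have hfU' : MapsTo f W U := hfU.mono_right sdiff_subset
  obtain ⟨F, ⟨hFa, hgF⟩, -⟩ := H.isCoveringMapOn_restrict.existsUnique_continuousMap_lifts
    ⟨hfU'.restrict f W U, hf.mapsToRestrict hfU'⟩ (a₀ := ⟨a, ha⟩) (e₀ := ⟨b, hb⟩)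
    (Subtype.ext hgb) fun w => (hfU w.2).2
  have hF : ∀ w : W, extend Subtype.val (fun w => (F w : ℂ)) 0 (w : E) = F w :=
    Subtype.val_injective.extend_apply _ _
  refine ⟨extend Subtype.val (fun w => (F w : ℂ)) 0, ?_, fun w hw => ?_, ?_, fun w hw => ?_⟩
  · exact continuousOn_iff_continuous_domRestrict.2
      ((continuous_subtype_val.comp F.continuous).congr fun w => (hF w).symm)
  · exact hF ⟨w, hw⟩ ▸ (F ⟨w, hw⟩).2
  · rw [hF ⟨a, ha⟩, hFa]
  · rw [comp_apply, hF ⟨w, hw⟩]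
    exact congrArg Subtype.val (congrFun hgF ⟨w, hw⟩)

theorem exists_differentiableOn_lift (H : IsProperHolomorphic g U' U) {W : Set ℂ}
    (hWo : IsOpen W) (hWc : IsSimplyConnected W) {f : ℂ → ℂ} (hf : DifferentiableOn ℂ f W)
    (hfU : MapsTo f W (U \ g '' critPts g U')) {a b : ℂ} (ha : a ∈ W) (hb : b ∈ U')
    (hgb : g b = f a) :
    ∃ F : ℂ → ℂ, DifferentiableOn ℂ F W ∧ MapsTo F W U' ∧ F a = b ∧ EqOn (g ∘ F) f W := by
  obtain ⟨F, hFc, hFU, hFa, hgF⟩ :=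
    H.exists_continuousOn_lift hWo hWc hf.continuousOn hfU ha hb hgb
  refine ⟨F, fun w hw => DifferentiableAt.differentiableWithinAt ?_, hFU, hFa, hgF⟩
  have hne : deriv g (F w) ≠ 0 := fun h0 =>
    (hfU hw).2 ⟨F w, ⟨hFU hw, h0⟩, hgF hw⟩
  have hW := hWo.mem_nhds hw
  exact differentiableAt_of_comp_eventuallyEq (H.hasStrictDerivAt (hFU hw)) hne
    (hf.differentiableAt hW) (hFc.continuousAt hW) (hgF.eventuallyEq_of_mem hW)

theorem exists_seq_lifts_along_backward_orbit (H : IsProperHolomorphic g U' U) (hU : U' ⊆ U)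
    {W : Set ℂ} (hWo : IsOpen W) (hWc : IsSimplyConnected W) {f : ℂ → ℂ}
    (hf : DifferentiableOn ℂ f W) (hfU : MapsTo f W (U \ postCrit g U'))
    {a : ℂ} (ha : a ∈ W) {b : ℕ → ℂ}
    (hb : ∀ n, b n ∈ U') (hb₀ : b 0 = f a) (hgb : ∀ n, g (b (n + 1)) = b n) :
    ∃ F : ℕ → ℂ → ℂ, F 0 = f ∧ ∀ n, DifferentiableOn ℂ (F n) W ∧ F n a = b n ∧
      MapsTo (F (n + 1)) W U' ∧ EqOn (g ∘ F (n + 1)) (F n) W := by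
  let P : ℕ → (ℂ → ℂ) → Prop := fun n F =>
    DifferentiableOn ℂ F W ∧ MapsTo F W (U \ postCrit g U') ∧ F a = b n
  have hlift : ∀ n F, P n F → ∃ F', P (n + 1) F' ∧ MapsTo F' W U' ∧ EqOn (g ∘ F') F W := by
    rintro n F ⟨hFd, hFU, hFa⟩
    obtain ⟨F', hFd', hFU', hFa', hgF⟩ := H.exists_differentiableOn_lift hWo hWc hFd
      (hFU.mono_right (sdiff_subset_sdiff_right (image_critPts_subset_postCrit g U'))) ha
      (hb (n + 1)) ((hgb n).trans hFa.symm)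
    refine ⟨F', ⟨hFd', fun w hw => ⟨hU (hFU' hw), fun hmem => (hFU hw).2 ?_⟩, hFa'⟩, hFU', hgF⟩
    exact hgF hw ▸ apply_mem_postCrit (H.hasStrictDerivAt (hFU' hw)).hasDerivAt.continuousAt hmem
  choose! next hnext using hlift
  let F : ℕ → ℂ → ℂ := fun n => Nat.rec f next n
  have hF : ∀ n, P n (F n) := by
    intro n
    induction n with
    | zero => exact ⟨hf, hfU, hb₀.symm⟩
    | succ n ih => exact (hnext n _ ih).1
  exact ⟨F, rfl, fun n => ⟨(hF n).1, (hF n).2.2, (hnext n _ (hF n)).2⟩⟩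

end IsProperHolomorphic

theorem eqOn_iterate_comp {α β : Type*} {g : β → β} {F : ℕ → α → β} {W : Set α}
    (hgF : ∀ n, EqOn (g ∘ F (n + 1)) (F n) W) (m n : ℕ) :
    EqOn (g^[m] ∘ F (n + m)) (F n) W := by
  induction m with
  | zero => exact eqOn_refl _ _
  | succ m ih => exact fun w hw => (congrArg g^[m] (hgF (n + m) hw)).trans (ih hw)

theorem inverse_branches_to_repelling_general {g : ℂ → ℂ} {U' U W : Set ℂ} {a : ℂ} {p : ℕ}
    (H : IsProperHolomorphic g U' U) (hU'c : IsSimplyConnected U') (hU' : U' ≠ univ)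
    (hU'U : U' ⊆ U) (horb : ∀ n : ℕ, g^[n] a ∈ U') (hper : g^[p] a = a)
    (hrep : 1 < ‖deriv (g^[p]) a‖) (hWo : IsOpen W) (hWc : IsSimplyConnected W)
    (hWU : W ⊆ U \ postCrit g U') (haW : a ∈ W) :
    ∃ (nk : ℕ → ℕ) (h : ℕ → ℂ → ℂ), StrictMono nk ∧
      (∀ k : ℕ, DifferentiableOn ℂ (h k) W ∧
        ∀ w ∈ W, (∀ j < nk k, g^[j] (h k w) ∈ U') ∧ g^[nk k] (h k w) = w) ∧
      TendstoLocallyUniformlyOn (fun k : ℕ => h k) (fun _ => a) atTop W := by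
  obtain ⟨q, rfl⟩ : ∃ q, p = q + 1 :=
    Nat.exists_eq_succ_of_ne_zero (by rintro rfl; simp at hrep)
  -- Going `q = p - 1` steps forward along the cycle is going one step backward.
  obtain ⟨F, hF₀, hF⟩ := H.exists_seq_lifts_along_backward_orbit hU'U hWo hWc differentiableOn_id
    hWU haW (b := fun n => g^[q * n] a) (fun n => horb _) rfl fun n => by
      rw [← iterate_succ_apply' g, Nat.succ_eq_add_one,
        show q * (n + 1) + 1 = q * n + (q + 1) by ring, iterate_add_apply, hper]
  choose hFd hFa hFU hgF using hF
  have hiter := eqOn_iterate_comp hgF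
  have hFU' : ∀ n ≠ 0, MapsTo (F n) W U' := fun n hn => Nat.succ_pred_eq_of_ne_zero hn ▸ hFU _
  refine ⟨fun k => (q + 1) * (k + 1), fun k => F ((q + 1) * (k + 1)),
    fun i j hij => by dsimp only; gcongr, fun k => ⟨hFd _, fun w hw => ⟨fun j hj => ?_, ?_⟩⟩, ?_⟩
  · have hmem := hFU' ((q + 1) * (k + 1) - j) (Nat.sub_ne_zero_of_lt hj) hw
    rwa [← hiter j _ hw, Nat.sub_add_cancel hj.le] at hmem
  · simpa [hF₀] using hiter ((q + 1) * (k + 1)) 0 hw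
  · refine tendstoLocallyUniformlyOn_inverse_iterates H.isOpen_source hU'c hU' hWo
      hWc.isPathConnected.isConnected.isPreconnected (horb 0) haW hrep (fun k => hFd _)
      (fun k => hFU' _ (by positivity)) (fun k => ?_) fun k => hiter (q + 1) ((q + 1) * (k + 1))
    beta_reduce
    rw [hFa, mul_left_comm, iterate_mul]
    exact iterate_fixed hper _

/-- **Lemma (inverse iterates converge to a repelling cycle).** Let `a` be a repelling
periodic point of `g` lying in the unbounded component `Ω` of `ℂ \ P_g`, and let
`z ∈ U ∩ Ω`. Then for every simply connected domain `W ⊆ Ω ∩ U` containing `a` and `z`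
there is a sequence of well-defined inverse branches `g^{-n_k} : W → ℂ` (with `n_k → ∞`)
converging to the constant `a` uniformly on compact subsets of `W`. -/
theorem inverse_branches_to_repelling {g : ℂ → ℂ} {U' U : Set ℂ} {d : ℕ}
    (H : PLSetting g U' U d) {a z : ℂ} {p : ℕ}
    (hp : 1 ≤ p) (horb : ∀ n : ℕ, g^[n] a ∈ U') (hper : g^[p] a = a)
    (hrep : 1 < ‖deriv (g^[p]) a‖)
    (haΩ : ¬ Bornology.IsBounded (connectedComponentIn (postCrit g U')ᶜ a))
    (hzU : z ∈ U) (hzΩ : z ∈ connectedComponentIn (postCrit g U')ᶜ a)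
    {W : Set ℂ} (hW : IsTopDisk W)
    (hWΩ : W ⊆ connectedComponentIn (postCrit g U')ᶜ a) (hWU : W ⊆ U)
    (haW : a ∈ W) (hzW : z ∈ W) :
    ∃ (nk : ℕ → ℕ) (h : ℕ → ℂ → ℂ), StrictMono nk ∧
      (∀ k : ℕ, DifferentiableOn ℂ (h k) W ∧
        ∀ w ∈ W, (∀ j < nk k, g^[j] (h k w) ∈ U') ∧ g^[nk k] (h k w) = w) ∧
      TendstoLocallyUniformlyOn (fun k : ℕ => h k) (fun _ => a) atTop W := by
  have hU' : U' ≠ univ := fun h => H.ne (H.subset.antisymm (h ▸ subset_univ U))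
  have hWP : W ⊆ (postCrit g U')ᶜ := hWΩ.trans (connectedComponentIn_subset _ _)
  exact inverse_branches_to_repelling_general H.isProperHolomorphic H.disk'.2.2 hU' H.subset horb
    hper hrep hW.1 hW.2.2 (fun w hw => ⟨hWU hw, hWP hw⟩) haW
end
end

section
/- Let X be a compact forward invariant set (g(X) ⊂ X) with P_g ⊂ X, and let D_∞ = U \ hull(X). Then g⁻¹(D_∞) ⊂ D_∞ and g(hull(X)) ⊂ hull(X). -/
open Set Function Metric Topology Filter

noncomputable section

/-- The topological hull of `X`: the complement of the unbounded component of `ℂ \ X`. -/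
def topHull (X : Set ℂ) : Set ℂ :=
  {z | Bornology.IsBounded (connectedComponentIn Xᶜ z)}

/-!
Two facts combine. First, a simply connected open set `V` containing the closed set `X` contains
`hull(X)`. Indeed, if `z₀ ∉ V` then `z - z₀` has a continuous logarithm on `X`. If `z₀` lay in a
bounded component `W` of `ℂ \ X`, extending that logarithm over `W` would replace `z - z₀` by a
nonvanishing continuous function on `ℂ` that is unchanged outside `W`; a logarithm of this function
would restrict to a logarithm of `z - z₀` on a large circle. Second, for a bounded component `W` of
`ℂ \ X`, the open mapping theorem gives `∂g(W) ⊆ g(∂W) ⊆ g(X) ⊆ X`, so `g(W)` contains every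
component of `ℂ \ X` that it meets, which is therefore bounded. If `g` is constant on `W`, its value
lies in `g(∂W)` by continuity.
-/

theorem frontier_connectedComponentIn_subset_compl {α : Type*} [TopologicalSpace α]
    [LocallyConnectedSpace α] {U : Set α} (hU : IsOpen U) (x : α) :
    frontier (connectedComponentIn U x) ⊆ Uᶜ := by
  intro y hy hyU
  obtain ⟨z, hzy, hzx⟩ := mem_closure_iff.1 hy.1 _ hU.connectedComponentIn
    (mem_connectedComponentIn hyU)
  have hyx : y ∈ connectedComponentIn U x := by
    rw [connectedComponentIn_eq hzx, ← connectedComponentIn_eq hzy]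
    exact mem_connectedComponentIn hyU
  exact hU.connectedComponentIn.frontier_eq.subset hy |>.2 hyx

section ContinuousLog

theorem exists_continuous_ne_zero_eqOn_compl {α : Type*} [TopologicalSpace α] [NormalSpace α]
    {W : Set α} {f l : α → ℂ} (hf : ContinuousOn f (closure Wᶜ)) (hf₀ : ∀ x ∉ W, f x ≠ 0)
    (hl : ContinuousOn l (frontier W)) (hlf : EqOn (Complex.exp ∘ l) f (frontier W)) :
    ∃ F : α → ℂ, Continuous F ∧ (∀ x, F x ≠ 0) ∧ EqOn F f Wᶜ := by
  classical
  obtain ⟨L, hL⟩ := ContinuousMap.exists_restrict_eq isClosed_frontier ⟨_, hl.domRestrict⟩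
  have hLl : EqOn L l (frontier W) := fun x hx ↦ DFunLike.congr_fun hL ⟨x, hx⟩
  refine ⟨W.piecewise (Complex.exp ∘ L) f, continuous_piecewise (fun x hx ↦ ?_)
    (by fun_prop) hf, fun x ↦ ?_, W.piecewise_eqOn_compl _ _⟩
  · exact (congrArg Complex.exp (hLl hx)).trans (hlf hx)
  · by_cases hx : x ∈ W
    · rw [piecewise_eq_of_mem _ _ _ hx]
      exact Complex.exp_ne_zero _
    · rw [piecewise_eq_of_notMem _ _ _ hx]
      exact hf₀ x hx

theorem not_continuousOn_sphere_of_exp_eq_sub {l : ℂ → ℂ} {z₀ : ℂ} {R : ℝ} (hR : 0 < R)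
    (hl : EqOn (Complex.exp ∘ l) (· - z₀) (sphere z₀ R)) : ¬ ContinuousOn l (sphere z₀ R) := by
  intro hlc
  have hexp (θ : ℝ) : Complex.exp (l (circleMap z₀ R θ)) = R * Complex.exp (θ * Complex.I) := by
    simpa [circleMap] using hl (circleMap_mem_sphere z₀ hR.le θ)
  have hlift : (fun θ ↦ l (circleMap z₀ R θ)) =
      fun θ : ℝ ↦ l (circleMap z₀ R 0) + θ * Complex.I := by
    refine Complex.isCoveringMap_exp.eq_of_comp_eq
      (hlc.comp_continuous (continuous_circleMap z₀ R) (circleMap_mem_sphere z₀ hR.le))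
      (by fun_prop) ?_ 0 (by simp)
    funext θ
    apply Subtype.ext
    simp [Complex.exp_add, hexp]
  have hturn := congrFun hlift (2 * Real.pi)
  have hperiod : circleMap z₀ R (2 * Real.pi) = circleMap z₀ R 0 := by
    simpa using periodic_circleMap z₀ R 0
  simp [hperiod, Real.pi_ne_zero] at hturn

end ContinuousLog

section Hull

variable {X : Set ℂ} {z : ℂ}

theorem mem_topHull_iff : z ∈ topHull X ↔ Bornology.IsBounded (connectedComponentIn Xᶜ z) :=
  Iff.rfl

theorem subset_topHull (X : Set ℂ) : X ⊆ topHull X := by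
  intro z hz
  rw [mem_topHull_iff, connectedComponentIn_eq_empty (notMem_compl_iff.2 hz)]
  exact Bornology.isBounded_empty

theorem connectedComponentIn_compl_subset_topHull (hz : z ∈ topHull X) :
    connectedComponentIn Xᶜ z ⊆ topHull X := by
  intro w hw
  rwa [mem_topHull_iff, ← connectedComponentIn_eq hw]

theorem frontier_connectedComponentIn_compl_subset (hX : IsClosed X) (z : ℂ) :
    frontier (connectedComponentIn Xᶜ z) ⊆ X :=
  (frontier_connectedComponentIn_subset_compl hX.isOpen_compl z).trans_eq (compl_compl X)

theorem closure_connectedComponentIn_compl_subset_topHull (hX : IsClosed X) (hz : z ∈ topHull X) :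
    closure (connectedComponentIn Xᶜ z) ⊆ topHull X := by
  rw [closure_eq_self_union_frontier]
  exact union_subset (connectedComponentIn_compl_subset_topHull hz)
    ((frontier_connectedComponentIn_compl_subset hX z).trans (subset_topHull X))

theorem notMem_topHull_of_exp_eq_sub (hX : IsClosed X) {l : ℂ → ℂ} (hlc : ContinuousOn l X)
    (hl : EqOn (Complex.exp ∘ l) (· - z) X) : z ∉ topHull X := by
  intro hz
  have hzX : z ∉ X := fun h ↦ Complex.exp_ne_zero (l z) ((hl h).trans (sub_self z))
  set W := connectedComponentIn Xᶜ z
  have hWX : frontier W ⊆ X := frontier_connectedComponentIn_compl_subset hX z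
  obtain ⟨F, hFc, hF₀, hF⟩ := exists_continuous_ne_zero_eqOn_compl (W := W) (f := (· - z))
    (by fun_prop) (fun w hw h ↦ hw (sub_eq_zero.1 h ▸ mem_connectedComponentIn hzX))
    (hlc.mono hWX) (hl.mono hWX)
  have : ContractibleSpace (univ : Set ℂ) := (Homeomorph.Set.univ ℂ).contractibleSpace
  obtain ⟨L, hLc, hL⟩ := Complex.exists_continuousOn_eqOn_exp_comp
    (SimplyConnectedSpace.ofContractible (univ : Set ℂ)) isOpen_univ hFc.continuousOn
    (by simpa using hF₀)
  obtain ⟨R, hR, hWR⟩ := (mem_topHull_iff.1 hz).subset_ball_lt 0 z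
  have hsphere : sphere z R ⊆ Wᶜ := fun w hw h ↦ (hWR h).ne hw
  exact not_continuousOn_sphere_of_exp_eq_sub hR
    ((hL.mono (subset_univ _)).trans (hF.mono hsphere)) (hLc.mono (subset_univ _))

theorem topHull_subset_of_isSimplyConnected {V : Set ℂ} (hV : IsSimplyConnected V)
    (hVo : IsOpen V) (hX : IsClosed X) (hXV : X ⊆ V) : topHull X ⊆ V := by
  intro z hz
  by_contra hzV
  obtain ⟨l, hlc, hl⟩ := Complex.exists_continuousOn_eqOn_exp_comp hV hVo
    (g := (· - z)) (by fun_prop) (by rintro ⟨w, hw, h⟩; exact hzV (sub_eq_zero.1 h ▸ hw))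
  exact notMem_topHull_of_exp_eq_sub hX (hlc.mono hXV) (hl.mono hXV) hz

end Hull

section HolomorphicImage

theorem subset_image_of_disjoint_image_frontier {f : ℂ → ℂ} {W D : Set ℂ} (hf : DiffContOnCl ℂ f W)
    (hWo : IsOpen W) (hWc : IsPreconnected W) (hWb : Bornology.IsBounded W)
    (hD : IsPreconnected D) (hmeet : (D ∩ f '' W).Nonempty)
    (hdisj : Disjoint D (f '' frontier W)) : D ⊆ f '' W := by
  have himage : f '' closure W = f '' W ∪ f '' frontier W := by
    rw [closure_eq_self_union_frontier, image_union]
  have hclosed : IsClosed (f '' closure W) :=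
    (hWb.isCompact_closure.image_of_continuousOn hf.continuousOn).isClosed
  rcases (hf.differentiableOn.analyticOnNhd hWo).is_constant_or_isOpen hWc with ⟨c, hc⟩ | hopen
  · exfalso
    obtain ⟨_, hwD, w, hw, rfl⟩ := hmeet
    obtain ⟨b, hb⟩ : (frontier W).Nonempty := nonempty_frontier_iff.2
      ⟨⟨w, hw⟩, fun h ↦ NormedSpace.unbounded_univ ℂ ℂ (h ▸ hWb)⟩
    have hconst : EqOn f (fun _ ↦ c) (closure W) :=
      EqOn.of_subset_closure hc hf.continuousOn continuousOn_const subset_closure subset_rfl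
    exact disjoint_left.1 hdisj hwD ⟨b, hb, (hconst hb.1).trans (hc w hw).symm⟩
  · refine hD.subset_of_closure_inter_subset (hopen W subset_rfl hWo) hmeet ?_
    rintro y ⟨hy, hyD⟩
    have hy' : y ∈ f '' W ∪ f '' frontier W :=
      himage ▸ closure_minimal (image_mono subset_closure) hclosed hy
    exact hy'.resolve_right (disjoint_left.1 hdisj hyD)

theorem mapsTo_topHull {g : ℂ → ℂ} {X Y : Set ℂ} (hX : IsClosed X)
    (hgc : ContinuousOn g (topHull X)) (hgd : DifferentiableOn ℂ g (topHull X \ X))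
    (hXY : MapsTo g X Y) : MapsTo g (topHull X) (topHull Y) := by
  intro z hz
  by_cases hzX : z ∈ X
  · exact subset_topHull Y (hXY hzX)
  by_cases hgz : g z ∈ Y
  · exact subset_topHull Y hgz
  set W := connectedComponentIn Xᶜ z
  have hWb : Bornology.IsBounded W := mem_topHull_iff.1 hz
  have hg : DiffContOnCl ℂ g W :=
    ⟨hgd.mono (subset_inter (connectedComponentIn_compl_subset_topHull hz)
      (connectedComponentIn_subset _ _)),
      hgc.mono (closure_connectedComponentIn_compl_subset_topHull hX hz)⟩
  have hboundary : Disjoint (connectedComponentIn Yᶜ (g z)) (g '' frontier W) :=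
    (disjoint_compl_left (a := Y)).mono (connectedComponentIn_subset _ _)
      ((hXY.mono_left (frontier_connectedComponentIn_compl_subset hX z)).image_subset)
  have hcover : connectedComponentIn Yᶜ (g z) ⊆ g '' W :=
    subset_image_of_disjoint_image_frontier hg hX.isOpen_compl.connectedComponentIn
      isPreconnected_connectedComponentIn hWb isPreconnected_connectedComponentIn
      ⟨g z, mem_connectedComponentIn hgz, mem_image_of_mem g (mem_connectedComponentIn hzX)⟩
      hboundary
  have hcompact : IsCompact (g '' closure W) :=
    hWb.isCompact_closure.image_of_continuousOn hg.continuousOn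
  exact mem_topHull_iff.2 (hcompact.isBounded.subset <| hcover.trans (image_mono subset_closure))

end HolomorphicImage

theorem hull_invariance_general {g : ℂ → ℂ} {U' U X : Set ℂ} (hU' : IsSimplyConnected U')
    (hU'o : IsOpen U') (hUU : U' ⊆ U) (hg : DifferentiableOn ℂ g U') (hX : IsClosed X)
    (hXsub : X ⊆ U') (hXinv : g '' X ⊆ X) :
    U' ∩ g ⁻¹' (U \ topHull X) ⊆ U \ topHull X ∧
    g '' topHull X ⊆ topHull X := by
  have hsub : topHull X ⊆ U' := topHull_subset_of_isSimplyConnected hU' hU'o hX hXsub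
  have hmaps : MapsTo g (topHull X) (topHull X) :=
    mapsTo_topHull hX (hg.continuousOn.mono hsub) (hg.mono (sdiff_subset.trans hsub))
      (mapsTo_iff_image_subset.2 hXinv)
  exact ⟨fun z hz ↦ ⟨hUU hz.1, fun hzX ↦ hz.2.2 (hmaps hzX)⟩, hmaps.image_subset⟩

/-- **Proposition (invariance of the hull).** Let `X ⊆ U'` be a compact forward invariant
set (`g(X) ⊆ X`) containing the postcritical set, and let `D_∞ = U \ hull(X)`. Then
`g⁻¹(D_∞) ⊆ D_∞` and `g(hull(X)) ⊆ hull(X)`. -/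
theorem hull_invariance {g : ℂ → ℂ} {U' U : Set ℂ} {d : ℕ}
    (H : PLSetting g U' U d) {X : Set ℂ}
    (hXcomp : IsCompact X) (hXsub : X ⊆ U') (hXinv : g '' X ⊆ X)
    (hPX : postCrit g U' ⊆ X) :
    U' ∩ g ⁻¹' (U \ topHull X) ⊆ U \ topHull X ∧
    g '' topHull X ⊆ topHull X :=
  hull_invariance_general H.disk'.2.2 H.disk'.1 H.subset H.holo hXcomp.isClosed hXsub hXinv
end
end
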